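/- Wavelet-tree range-restriction correctness: with L, W, L₀, L₁ as above, for any interval [b..e] of L, the set of distinct symbols of the lower half occurring in L[b..e] equals the set of distinct symbols occurring in L₀[rank₀(W,b−1)+1 .. rank₀(W,e)], and similarly the distinct upper-half symbols in L[b..e] equal the distinct symbols in L₁[rank₁(W,b−1)+1 .. rank₁(W,e)]. -/

import Mathlib

/-- The strSlice `S[b..e]` of a string (1-based, inclusive). -/
def strSlice {α : Type*} (S : List α) (b e : ℕ) : List α := (S.take e).drop (b - 1)

theorem aux_take (p : ℕ → Bool) (L : List ℕ) (n : ℕ) :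
    (L.filter p).take ((L.take n).countP p) = (L.take n).filter p := by
  conv_lhs => rw [← List.take_append_drop n L, List.filter_append]
  rw [List.take_append_drop, List.countP_eq_length_filter, List.take_left]

theorem aux_drop (p : ℕ → Bool) (L : List ℕ) (n : ℕ) :
    (L.filter p).drop ((L.take n).countP p) = (L.drop n).filter p := by
  conv_lhs => rw [← List.take_append_drop n L, List.filter_append]
  rw [List.take_append_drop, List.countP_eq_length_filter, List.drop_left]

theorem aux_slice (p : ℕ → Bool) (L : List ℕ) (m e : ℕ) :
    ((L.filter p).take ((L.take e).countP p)).drop ((L.take m).countP p)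
      = ((L.take e).drop m).filter p := by
  rw [aux_take]
  rcases le_total m e with h | h
  · rw [← aux_drop p (L.take e) m, List.take_take, min_eq_left h]
  · rw [List.drop_eq_nil_of_le, List.drop_eq_nil_of_le, List.filter_nil]
    · exact (List.length_take_le _ _).trans h
    · rw [← List.countP_eq_length_filter]
      exact (List.take_sublist_take_left h).countP_le

/-- wavelet-tree range-restriction correctness. For an interval
`[b..e]` of `L`, the distinct lower-half symbols occurring in `L[b..e]` are
exactly the distinct symbols occurring in
`L₀[rank₀(W,b−1)+1 .. rank₀(W,e)]`, and similarly the distinct upper-half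
symbols in `L[b..e]` are those occurring in
`L₁[rank₁(W,b−1)+1 .. rank₁(W,e)]`. -/
theorem wavelet_range_restriction (k : ℕ) (L : List ℕ)
    (hL : ∀ a ∈ L, 1 ≤ a ∧ a ≤ 2 * k)
    (W : List Bool) (hW : W = L.map (fun a => decide (k < a)))
    (L₀ L₁ : List ℕ)
    (hL₀ : L₀ = L.filter (fun a => decide (a ≤ k)))
    (hL₁ : L₁ = L.filter (fun a => decide (k < a)))
    (b e : ℕ) (hb : 1 ≤ b) (he : e ≤ L.length) :
    {c | c ≤ k ∧ c ∈ strSlice L b e} =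
      {c | c ∈ strSlice L₀ ((W.take (b - 1)).count false + 1) ((W.take e).count false)} ∧
    {c | k < c ∧ c ∈ strSlice L b e} =
      {c | c ∈ strSlice L₁ ((W.take (b - 1)).count true + 1) ((W.take e).count true)} := by
  subst hW hL₀ hL₁
  have h0 : ∀ n, ((L.map (fun a => decide (k < a))).take n).count false
      = (L.take n).countP (fun a => decide (a ≤ k)) := by
    intro n
    rw [← List.map_take, List.count, List.countP_map]
    congr 1
    funext a
    by_cases h : k < a <;> simp [h] <;> omega
  have h1 : ∀ n, ((L.map (fun a => decide (k < a))).take n).count true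
      = (L.take n).countP (fun a => decide (k < a)) := by
    intro n
    rw [← List.map_take, List.count, List.countP_map]
    congr 1
    funext a
    by_cases h : k < a <;> simp [h]
  simp only [strSlice, h0, h1, Nat.add_sub_cancel, aux_slice]
  constructor <;> ext c <;> simp [and_comm]
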